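/- arXiv:2304.11121 — 3 statements merged into one kernel-verified Lean document; each statement's English description precedes it below -/
import Mathlib

section
/- Let σ, ρ : ℝ → ℝ be differentiable on [0, ∞) with |σ(0)| < ρ(0) and ρ(t) > 0 for all t ≥ 0. Assume: (i) for every t₁ > 0, if σ(t₁) = ρ(t₁) and |σ(t)| < ρ(t) for all t ∈ [0, t₁), then σ'(t₁) < ρ'(t₁); and (ii) for every t₁ > 0, if σ(t₁) = −ρ(t₁) and |σ(t)| < ρ(t) for all t ∈ [0, t₁), then σ'(t₁) > −ρ'(t₁). Then |σ(t)| < ρ(t) for all t ≥ 0. -/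
/-! If the constraint failed, continuity would give a first contact time `t₁` of `|σ|` with `ρ`.
Before `t₁` the graph of `σ` lies strictly between those of `-ρ` and `ρ`, and at `t₁` it meets one
of them. Comparing left difference quotients at `t₁` shows that the derivative of `σ` there does
not point back into the band. -/

open Set Filter Topology

lemma exists_first_eq_of_lt_of_le {α β : Type*} [ConditionallyCompleteLinearOrder α]
    [DenselyOrdered α] [TopologicalSpace α] [OrderTopology α] [LinearOrder β]
    [TopologicalSpace β] [OrderClosedTopology β] {f g : α → β} {a b : α} (hab : a ≤ b)
    (hf : ContinuousOn f (Icc a b)) (hg : ContinuousOn g (Icc a b))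
    (ha : f a < g a) (hb : g b ≤ f b) :
    ∃ c ∈ Ioc a b, f c = g c ∧ ∀ t ∈ Ico a c, f t < g t := by
  have hcompact : IsCompact {t ∈ Icc a b | g t ≤ f t} :=
    isCompact_Icc.of_isClosed_subset (isClosed_Icc.isClosed_le hg hf) (sep_subset _ _)
  obtain ⟨c, ⟨hc, hgf⟩, hleast⟩ := hcompact.exists_isLeast ⟨b, right_mem_Icc.2 hab, hb⟩
  have hac : a < c := hc.1.lt_of_ne fun h => ha.not_ge (h ▸ hgf)
  have hsub : Icc a c ⊆ Icc a b := Icc_subset_Icc_right hc.2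
  obtain ⟨d, hd, heq⟩ := isPreconnected_Icc.intermediate_value₂ (left_mem_Icc.2 hc.1)
    (right_mem_Icc.2 hc.1) (hf.mono hsub) (hg.mono hsub) ha.le hgf
  have hdc : d = c := hd.2.antisymm (hleast ⟨hsub hd, heq.ge⟩)
  exact ⟨c, ⟨hac, hc.2⟩, hdc ▸ heq, fun t ht =>
    not_le.1 fun h => ht.2.not_ge (hleast ⟨hsub (Ico_subset_Icc_self ht), h⟩)⟩

lemma le_of_hasDerivWithinAt_Iio_of_eventuallyLE {f g : ℝ → ℝ} {f' g' c : ℝ}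
    (hf : HasDerivWithinAt f f' (Iio c) c) (hg : HasDerivWithinAt g g' (Iio c) c)
    (hle : f ≤ᶠ[𝓝[<] c] g) (hc : f c = g c) : g' ≤ f' := by
  rw [hasDerivWithinAt_iff_tendsto_slope' self_notMem_Iio] at hf hg
  refine le_of_tendsto_of_tendsto hg hf ?_
  filter_upwards [hle, self_mem_nhdsWithin] with t hfg htc
  rw [slope_def_field, slope_def_field, hc]
  exact div_le_div_of_nonpos_of_le (sub_nonpos.2 (mem_Iio.1 htc).le) (sub_le_sub_right hfg _)

theorem barrier_invariance_general {σ ρ σ' ρ' : ℝ → ℝ} {a : ℝ}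
    (hσ : ContinuousOn σ (Ici a)) (hρ : ContinuousOn ρ (Ici a))
    (hσ' : ∀ t > a, HasDerivWithinAt σ (σ' t) (Iio t) t)
    (hρ' : ∀ t > a, HasDerivWithinAt ρ (ρ' t) (Iio t) t)
    (ha : |σ a| < ρ a)
    (hup : ∀ t₁ > a, σ t₁ = ρ t₁ → (∀ t ∈ Ico a t₁, |σ t| < ρ t) → σ' t₁ < ρ' t₁)
    (hdown : ∀ t₁ > a, σ t₁ = -ρ t₁ → (∀ t ∈ Ico a t₁, |σ t| < ρ t) → -ρ' t₁ < σ' t₁) :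
    ∀ t ≥ a, |σ t| < ρ t := by
  intro T hT
  by_contra! hfail
  obtain ⟨t₁, ⟨ht₁, -⟩, hcontact, hbefore⟩ := exists_first_eq_of_lt_of_le hT
    (hσ.abs.mono Icc_subset_Ici_self) (hρ.mono Icc_subset_Ici_self) ha hfail
  have hband : ∀ᶠ t in 𝓝[<] t₁, -ρ t < σ t ∧ σ t < ρ t := by
    filter_upwards [Ico_mem_nhdsLT ht₁] with t ht using abs_lt.1 (hbefore t ht)
  rcases eq_or_eq_neg_of_abs_eq hcontact with hupper | hlower
  · have hle : ρ' t₁ ≤ σ' t₁ := le_of_hasDerivWithinAt_Iio_of_eventuallyLE (hσ' t₁ ht₁)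
      (hρ' t₁ ht₁) (hband.mono fun _ h => h.2.le) hupper
    exact hle.not_gt (hup t₁ ht₁ hupper hbefore)
  · have hle : σ' t₁ ≤ -ρ' t₁ := le_of_hasDerivWithinAt_Iio_of_eventuallyLE (hρ' t₁ ht₁).neg
      (hσ' t₁ ht₁) (hband.mono fun _ h => h.1.le) hlower.symm
    exact hle.not_gt (hdown t₁ ht₁ hlower hbefore)

/-- Abstract barrier (invariance) lemma capturing the contradiction structure
of the proof of Theorem 1: if at any first instant where `σ` would touch the
time-varying bound `±ρ` its derivative strictly pushes it back inside the band,
then `|σ(t)| < ρ(t)` for all `t ≥ 0`. -/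
theorem barrier_invariance
    (σ ρ : ℝ → ℝ)
    (hσ : ∀ t ∈ Set.Ici (0 : ℝ), DifferentiableAt ℝ σ t)
    (hρ : ∀ t ∈ Set.Ici (0 : ℝ), DifferentiableAt ℝ ρ t)
    (h0 : |σ 0| < ρ 0) (hρpos : ∀ t ≥ (0 : ℝ), 0 < ρ t)
    (hup : ∀ t₁ > (0 : ℝ), σ t₁ = ρ t₁ →
      (∀ t ∈ Set.Ico (0 : ℝ) t₁, |σ t| < ρ t) → deriv σ t₁ < deriv ρ t₁)
    (hdown : ∀ t₁ > (0 : ℝ), σ t₁ = -ρ t₁ →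
      (∀ t ∈ Set.Ico (0 : ℝ) t₁, |σ t| < ρ t) → -deriv ρ t₁ < deriv σ t₁) :
    ∀ t ≥ (0 : ℝ), |σ t| < ρ t := by
  exact barrier_invariance_general
    (fun t ht => (hσ t ht).continuousAt.continuousWithinAt)
    (fun t ht => (hρ t ht).continuousAt.continuousWithinAt)
    (fun t ht => (hσ t (mem_Ici_of_Ioi ht)).hasDerivAt.hasDerivWithinAt)
    (fun t ht => (hρ t (mem_Ici_of_Ioi ht)).hasDerivAt.hasDerivWithinAt) h0 hup hdown
end

section
/- Let n ≥ 1, a > 0, ε ≥ 0, and let e : ℝ → ℝ be infinitely differentiable (smooth). Define the operator L on smooth functions by (L f)(t) = f'(t) + a·f(t), and let σ = L^{n−1} e (the (n−1)-fold iterate of L applied to e). Assume the i-th derivative of e at 0 vanishes, e^{(i)}(0) = 0, for all i = 0, 1, …, n − 1, and that |σ(t)| ≤ ε for all t ≥ 0. Then for each i = 0, 1, …, n − 1 and all t ≥ 0, the i-th derivative of e satisfies |e^{(i)}(t)| ≤ (2a)^i · ε / a^{n−1}. -/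
/-!
Multiplying by the integrating factor `exp (a t)` turns `f' + a f` into the derivative of
`exp (a t) f t`, so a bound `M` on `‖f' + a f‖` and `f 0 = 0` give `‖f‖ ≤ M / a`. Peeling the
operators `d/dt + a` off one at a time then costs a factor `1 / a` each, and
`f^(i+1) = (f' + a f)^(i) - a f^(i)` recovers the higher derivatives: both terms on the right are
bounded by the same quantity, whence the factor `2 a` per derivative.
-/

open Set

section ShiftedDeriv

variable {E : Type*} [NormedAddCommGroup E] [NormedSpace ℝ E] {a : ℝ} {f : ℝ → E}

/-- The first-order differential operator `d/dt + a`, whose iterates build the sliding variable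
from the tracking error. -/
noncomputable def shiftedDeriv (a : ℝ) (f : ℝ → E) : ℝ → E :=
  fun t ↦ deriv f t + a • f t

lemma contDiff_shiftedDeriv {m : WithTop ℕ∞} (hf : ContDiff ℝ (m + 1) f) :
    ContDiff ℝ m (shiftedDeriv a f) :=
  hf.deriv'.add (hf.of_succ.const_smul a)

lemma iteratedDeriv_shiftedDeriv {i : ℕ} (hf : ContDiff ℝ (i + 1) f) (t : ℝ) :
    iteratedDeriv i (shiftedDeriv a f) t = iteratedDeriv (i + 1) f t + a • iteratedDeriv i f t := by
  unfold shiftedDeriv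
  rw [iteratedDeriv_fun_add hf.deriv'.contDiffAt (hf.of_succ.const_smul a).contDiffAt,
    ← iteratedDeriv_succ', iteratedDeriv_fun_const_smul_field]

lemma hasDerivAt_exp_mul_smul {t : ℝ} (hf : DifferentiableAt ℝ f t) (a : ℝ) :
    HasDerivAt (fun s ↦ Real.exp (a * s) • f s) (Real.exp (a * t) • shiftedDeriv a f t) t := by
  have hexp : HasDerivAt (fun s ↦ Real.exp (a * s)) (Real.exp (a * t) * a) t := by
    simpa using ((hasDerivAt_id t).const_mul a).exp
  refine (hexp.smul hf.hasDerivAt).congr_deriv ?_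
  rw [shiftedDeriv, smul_add, smul_smul]

lemma norm_le_of_norm_shiftedDeriv_le {M t : ℝ} (ha : a ≠ 0) (hf : Differentiable ℝ f)
    (ht : 0 ≤ t) (hM : ∀ s ∈ Ico 0 t, ‖shiftedDeriv a f s‖ ≤ M) :
    ‖f t‖ ≤ Real.exp (-(a * t)) * ‖f 0‖ + (1 - Real.exp (-(a * t))) * (M / a) := by
  have hB (s : ℝ) : HasDerivAt (fun s ↦ ‖f 0‖ + (Real.exp (a * s) - 1) * (M / a))
      (Real.exp (a * s) * M) s := by
    refine (((((hasDerivAt_id s).const_mul a).exp.sub_const 1).mul_const (M / a)).const_add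
      ‖f 0‖).congr_deriv ?_
    simp only [id_eq]
    field_simp
  have hexp : ‖Real.exp (a * t) • f t‖ ≤ ‖f 0‖ + (Real.exp (a * t) - 1) * (M / a) := by
    refine image_norm_le_of_norm_deriv_right_le_deriv_boundary
      (fun s _ ↦ (hasDerivAt_exp_mul_smul (hf s) a).continuousAt.continuousWithinAt)
      (fun s _ ↦ (hasDerivAt_exp_mul_smul (hf s) a).hasDerivWithinAt) (by simp) hB
      (fun s hs ↦ ?_) (right_mem_Icc.2 ht)
    rw [norm_smul, Real.norm_of_nonneg (Real.exp_pos _).le]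
    gcongr
    exact hM s hs
  rw [norm_smul, Real.norm_of_nonneg (Real.exp_pos _).le] at hexp
  calc ‖f t‖ = Real.exp (-(a * t)) * (Real.exp (a * t) * ‖f t‖) := by
        rw [← mul_assoc, ← Real.exp_add, neg_add_cancel, Real.exp_zero, one_mul]
    _ ≤ Real.exp (-(a * t)) * (‖f 0‖ + (Real.exp (a * t) - 1) * (M / a)) := by gcongr
    _ = Real.exp (-(a * t)) * ‖f 0‖ + (1 - Real.exp (-(a * t))) * (M / a) := by
        rw [Real.exp_neg]
        field_simp

lemma norm_le_div_of_norm_shiftedDeriv_le {M t : ℝ} (ha : 0 < a) (hf : Differentiable ℝ f)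
    (hf₀ : f 0 = 0) (ht : 0 ≤ t) (hM : ∀ s ∈ Icc 0 t, ‖shiftedDeriv a f s‖ ≤ M) :
    ‖f t‖ ≤ M / a := by
  have hM₀ : 0 ≤ M := (norm_nonneg _).trans (hM 0 (left_mem_Icc.2 ht))
  calc ‖f t‖ ≤ Real.exp (-(a * t)) * ‖f 0‖ + (1 - Real.exp (-(a * t))) * (M / a) :=
        norm_le_of_norm_shiftedDeriv_le ha.ne' hf ht fun s hs ↦ hM s (Ico_subset_Icc_self hs)
    _ = (1 - Real.exp (-(a * t))) * (M / a) := by rw [hf₀, norm_zero, mul_zero, zero_add]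
    _ ≤ M / a :=
        mul_le_of_le_one_left (by positivity) (sub_le_self 1 (Real.exp_pos _).le)

lemma norm_iteratedDeriv_le_of_shiftedDeriv {m : ℕ} {C t : ℝ} (ha : 0 ≤ a)
    (hf : ContDiff ℝ m f) (hft : ‖f t‖ ≤ C)
    (hC : ∀ i < m, ‖iteratedDeriv i (shiftedDeriv a f) t‖ ≤ (2 * a) ^ i * (a * C)) :
    ∀ i ≤ m, ‖iteratedDeriv i f t‖ ≤ (2 * a) ^ i * C := by
  intro i hi
  induction i with
  | zero => simpa using hft
  | succ i ih =>
    have hsplit : iteratedDeriv (i + 1) f t =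
        iteratedDeriv i (shiftedDeriv a f) t - a • iteratedDeriv i f t := by
      rw [iteratedDeriv_shiftedDeriv (hf.of_le (mod_cast hi)), add_sub_cancel_right]
    calc ‖iteratedDeriv (i + 1) f t‖
        ≤ ‖iteratedDeriv i (shiftedDeriv a f) t‖ + a * ‖iteratedDeriv i f t‖ := by
          rw [hsplit, ← norm_smul_of_nonneg ha]
          exact norm_sub_le _ _
      _ ≤ (2 * a) ^ i * (a * C) + a * ((2 * a) ^ i * C) := by
          gcongr
          · exact hC i hi
          · exact ih (Nat.le_of_succ_le hi)
      _ = (2 * a) ^ (i + 1) * C := by ring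

theorem sliding_tracking_bound_general {m : ℕ} {ε T : ℝ} {e : ℝ → E} (ha : 0 < a)
    (he : ContDiff ℝ m e) (hinit : ∀ i < m, iteratedDeriv i e 0 = 0)
    (hbound : ∀ t ∈ Icc 0 T, ‖(shiftedDeriv a)^[m] e t‖ ≤ ε) :
    ∀ i ≤ m, ∀ t ∈ Icc 0 T, ‖iteratedDeriv i e t‖ ≤ (2 * a) ^ i * ε / a ^ m := by
  simp only [mul_div_assoc]
  induction m generalizing e with
  | zero =>
    intro i hi t ht
    obtain rfl := Nat.le_zero.1 hi
    simpa using hbound t ht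
  | succ m ih =>
    have hinit' : ∀ i < m, iteratedDeriv i (shiftedDeriv a e) 0 = 0 := by
      intro i hi
      rw [iteratedDeriv_shiftedDeriv (he.of_le (mod_cast by omega)), hinit i (by omega),
        hinit (i + 1) (by omega), smul_zero, add_zero]
    have hLe : ∀ i ≤ m, ∀ t ∈ Icc 0 T,
        ‖iteratedDeriv i (shiftedDeriv a e) t‖ ≤ (2 * a) ^ i * (ε / a ^ m) :=
      ih (contDiff_shiftedDeriv he) hinit' hbound
    have he_le : ∀ t ∈ Icc 0 T, ‖e t‖ ≤ ε / a ^ (m + 1) := by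
      intro t ht
      rw [pow_succ, ← div_div]
      refine norm_le_div_of_norm_shiftedDeriv_le ha (he.differentiable (by simp))
        (by simpa using hinit 0 m.succ_pos) ht.1 fun s hs ↦ ?_
      simpa using hLe 0 m.zero_le s ⟨hs.1, hs.2.trans ht.2⟩
    have hcancel : a * (ε / a ^ (m + 1)) = ε / a ^ m := by
      rw [pow_succ]
      field_simp
    intro i hi t ht
    refine norm_iteratedDeriv_le_of_shiftedDeriv ha.le he (he_le t ht) (fun j hj ↦ ?_) i hi
    rw [hcancel]
    exact hLe j (Nat.lt_succ_iff.1 hj) t ht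

end ShiftedDeriv

/-- Tracking bound from Slotine and Li, Chapter 7 (zero initial error): with
`σ = (d/dt + a)^{n-1} e`, zero initial error derivatives, and `|σ(t)| ≤ ε` on
`[0, ∞)`, each derivative satisfies `|e^{(i)}(t)| ≤ (2a)^i ε / a^{n-1}`. -/
theorem sliding_tracking_bound
    (n : ℕ) (hn : 1 ≤ n) (a ε : ℝ) (ha : 0 < a) (hε : 0 ≤ ε)
    (e : ℝ → ℝ) (he : ContDiff ℝ (⊤ : ℕ∞) e)
    (σ : ℝ → ℝ)
    (hσ : σ = (fun f : ℝ → ℝ => fun t => deriv f t + a * f t)^[n - 1] e)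
    (hinit : ∀ i ≤ n - 1, iteratedDeriv i e 0 = 0)
    (hσbnd : ∀ t ≥ (0 : ℝ), |σ t| ≤ ε) :
    ∀ i ≤ n - 1, ∀ t ≥ (0 : ℝ),
      |iteratedDeriv i e t| ≤ (2 * a) ^ i * ε / a ^ (n - 1) := by
  subst hσ
  exact fun i hi t ht ↦ sliding_tracking_bound_general ha (contDiff_infty.1 he (n - 1))
    (fun j hj ↦ hinit j hj.le) (fun s hs ↦ hσbnd s hs.1) i hi t (right_mem_Icc.2 ht)
end

section
/- Let n ≥ 1, a > 0, ε ≥ 0, and let e : ℝ → ℝ be infinitely differentiable (smooth). Define the operator L on smooth functions by (L f)(t) = f'(t) + a·f(t), and let σ = L^{n−1} e. If |σ(t)| ≤ ε for all t ≥ 0, then for each i = 0, 1, …, n − 1 and every δ > 0, there exists T ≥ 0 such that |e^{(i)}(t)| ≤ (2a)^i · ε / a^{n−1} + δ for all t ≥ T. -/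
/-!
Write `L f = f' + a f`. The integrating factor `exp (a t)` shows that an asymptotic bound `C` on
`‖L f‖` gives the asymptotic bound `C / a` on `‖f‖`, because the contribution of the initial value
decays exponentially; then `f' = L f - a f` gives the asymptotic bound `2 C` on `‖f'‖`. Since `L`
commutes with differentiation, one can induct on the number of factors `L`: the bounds on
`(L e)^(i) = L (e^(i))` for `i ≤ m` yield those on `e^(i)` by the first estimate, and the one new
derivative `e^(m+1)` is bounded by the second.
-/

open Filter Set Topology

section SlidingOp

variable {𝕜 F : Type*} [NontriviallyNormedField 𝕜] [NormedAddCommGroup F] [NormedSpace 𝕜 F]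

/-- The first-order differential operator `d/dt + a`; the sliding variable of an error `e` is
obtained from `e` by iterating it. -/
noncomputable def slidingOp (a : 𝕜) (f : 𝕜 → F) : 𝕜 → F :=
  fun t => deriv f t + a • f t

lemma contDiff_slidingOp {n : WithTop ℕ∞} {f : 𝕜 → F} (a : 𝕜) (hf : ContDiff 𝕜 (n + 1) f) :
    ContDiff 𝕜 n (slidingOp a f) :=
  hf.deriv'.add (contDiff_const.smul (hf.of_le le_self_add))

lemma iteratedDeriv_slidingOp {j : ℕ} {f : 𝕜 → F} (a : 𝕜) (hf : ContDiff 𝕜 (j + 1) f) :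
    iteratedDeriv j (slidingOp a f) = slidingOp a (iteratedDeriv j f) := by
  funext t
  have haf : ContDiff 𝕜 j (fun s => a • f s) := contDiff_const.smul (hf.of_le le_self_add)
  calc iteratedDeriv j (slidingOp a f) t
      = iteratedDeriv j (deriv f) t + iteratedDeriv j (fun s => a • f s) t :=
        iteratedDeriv_fun_add hf.deriv'.contDiffAt haf.contDiffAt
    _ = deriv (iteratedDeriv j f) t + a • iteratedDeriv j f t := by
        rw [← iteratedDeriv_succ', iteratedDeriv_succ, iteratedDeriv_fun_const_smul_field]

end SlidingOp

section AsymptoticBound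

variable {E : Type*} [NormedAddCommGroup E]

/-- `AsympNormLE f C` says that `limsup ‖f t‖ ≤ C` as `t → ∞`. It is phrased without `limsup`,
whose value in `ℝ` is junk when `‖f‖` is unbounded. -/
def AsympNormLE (f : ℝ → E) (C : ℝ) : Prop :=
  ∀ C' > C, ∀ᶠ t in atTop, ‖f t‖ ≤ C'

lemma AsympNormLE.of_eventually_le {f : ℝ → E} {C : ℝ} (h : ∀ᶠ t in atTop, ‖f t‖ ≤ C) :
    AsympNormLE f C :=
  fun _ hC' => h.mono fun _ ht => ht.trans hC'.le

variable [NormedSpace ℝ E]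

lemma norm_le_of_norm_deriv_add_smul_le {f f' : ℝ → E} {a B T t : ℝ} (hTt : T ≤ t)
    (hf : ContinuousOn f (Icc T t))
    (hf' : ∀ s ∈ Ico T t, HasDerivWithinAt f (f' s) (Ici s) s)
    (hB : ∀ s ∈ Ico T t, ‖f' s + a • f s‖ ≤ a * B) :
    ‖f t‖ ≤ B + Real.exp (-(a * (t - T))) * (‖f T‖ - B) := by
  have hexp (s : ℝ) : HasDerivAt (fun s => Real.exp (a * (s - T)))
      (Real.exp (a * (s - T)) * a) s := by
    simpa using (((hasDerivAt_id s).sub_const T).const_mul a).exp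
  have hweighted : ‖Real.exp (a * (t - T)) • f t‖
      ≤ Real.exp (a * (t - T)) * B + (‖f T‖ - B) := by
    refine image_norm_le_of_norm_deriv_right_le_deriv_boundary
      (f := fun s => Real.exp (a * (s - T)) • f s)
      (f' := fun s => Real.exp (a * (s - T)) • (f' s + a • f s))
      (B := fun s => Real.exp (a * (s - T)) * B + (‖f T‖ - B))
      (B' := fun s => Real.exp (a * (s - T)) * a * B)
      (ContinuousOn.smul (by fun_prop) hf) (fun s hs => ?_) (by simp)
      (fun s => ((hexp s).mul_const B).add_const _) (fun s hs => ?_) (right_mem_Icc.2 hTt)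
    · refine ((hexp s).hasDerivWithinAt.smul (hf' s hs)).congr_deriv ?_
      rw [smul_add, mul_smul]
    · rw [norm_smul, Real.norm_of_nonneg (Real.exp_pos _).le, mul_assoc]
      exact mul_le_mul_of_nonneg_left (hB s hs) (Real.exp_pos _).le
  rw [norm_smul, Real.norm_of_nonneg (Real.exp_pos _).le] at hweighted
  refine le_of_mul_le_mul_left (hweighted.trans_eq ?_) (Real.exp_pos (a * (t - T)))
  rw [mul_add, ← mul_assoc, ← Real.exp_add, add_neg_cancel, Real.exp_zero, one_mul]

namespace AsympNormLE

variable {f : ℝ → E} {a C : ℝ}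

lemma of_slidingOp (ha : 0 < a) (hf : Differentiable ℝ f) (h : AsympNormLE (slidingOp a f) C) :
    AsympNormLE f (C / a) := by
  intro C' hC'
  obtain ⟨B, hCB, hBC'⟩ := exists_between hC'
  obtain ⟨T, hT⟩ := eventually_atTop.1 (h (a * B) ((div_lt_iff₀' ha).1 hCB))
  have hdecay : Tendsto (fun t => B + Real.exp (-(a * (t - T))) * (‖f T‖ - B)) atTop (𝓝 B) := by
    have hshift : Tendsto (fun t => a * (t - T)) atTop atTop :=
      (tendsto_atTop_add_const_right atTop (-T) tendsto_id).const_mul_atTop ha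
    simpa using ((Real.tendsto_exp_neg_atTop_nhds_zero.comp hshift).mul_const _).const_add B
  filter_upwards [hdecay.eventually_lt_const hBC', eventually_ge_atTop T] with t hlt hTt
  exact (norm_le_of_norm_deriv_add_smul_le hTt hf.continuous.continuousOn
    (fun s _ => (hf s).hasDerivAt.hasDerivWithinAt) fun s hs => hT s hs.1).trans hlt.le

lemma deriv_of_slidingOp (ha : 0 < a) (hf : Differentiable ℝ f)
    (h : AsympNormLE (slidingOp a f) C) : AsympNormLE (deriv f) (2 * C) := by
  intro C' hC'
  have hC : C < C' / 2 := by linarith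
  filter_upwards [h (C' / 2) hC, h.of_slidingOp ha hf (C' / 2 / a) (by gcongr)] with t hLf hft
  calc ‖deriv f t‖ = ‖slidingOp a f t - a • f t‖ := by rw [slidingOp, add_sub_cancel_right]
    _ ≤ ‖slidingOp a f t‖ + ‖a • f t‖ := norm_sub_le _ _
    _ = ‖slidingOp a f t‖ + a * ‖f t‖ := by rw [norm_smul, Real.norm_of_nonneg ha.le]
    _ ≤ C' / 2 + a * (C' / 2 / a) := by gcongr
    _ = C' := by rw [mul_div_cancel₀ _ ha.ne', add_halves]

end AsympNormLE

theorem sliding_tracking_bound_asymptotic_general {a ε : ℝ} (ha : 0 < a) {m : ℕ} {e : ℝ → E}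
    (he : ContDiff ℝ m e) (hσ : AsympNormLE ((slidingOp a)^[m] e) ε) {i : ℕ} (hi : i ≤ m) :
    AsympNormLE (iteratedDeriv i e) ((2 * a) ^ i * ε / a ^ m) := by
  induction m generalizing e i with
  | zero =>
    obtain rfl := Nat.le_zero.1 hi
    simpa using hσ
  | succ m ih =>
    push_cast at he
    have hdiff (j : ℕ) (hj : j ≤ m) : Differentiable ℝ (iteratedDeriv j e) :=
      he.differentiable_iteratedDeriv j (by exact_mod_cast Nat.lt_succ_of_le hj)
    have hL (j : ℕ) (hj : j ≤ m) :
        AsympNormLE (slidingOp a (iteratedDeriv j e)) ((2 * a) ^ j * ε / a ^ m) := by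
      rw [← iteratedDeriv_slidingOp a (he.of_le (by gcongr))]
      exact ih (contDiff_slidingOp a he) hσ hj
    obtain hi | rfl := Nat.le_succ_iff.1 hi
    · rw [pow_succ, ← div_div]
      exact (hL i hi).of_slidingOp ha (hdiff i hi)
    · have hconst : (2 * a) ^ (m + 1) * ε / a ^ (m + 1) = 2 * ((2 * a) ^ m * ε / a ^ m) := by
        field_simp
        ring
      rw [hconst, iteratedDeriv_succ]
      exact (hL m le_rfl).deriv_of_slidingOp ha (hdiff m le_rfl)

end AsymptoticBound

/-- Asymptotic tracking bound from Slotine and Li, Chapter 7 (arbitrary initial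
error): with `σ = (d/dt + a)^{n-1} e` and `|σ(t)| ≤ ε` on `[0, ∞)`, every
derivative bound `|e^{(i)}(t)| ≤ (2a)^i ε / a^{n-1}` is achieved asymptotically:
for every `δ > 0` the trajectory enters the δ-enlarged residual set in finite
time. -/
theorem sliding_tracking_bound_asymptotic
    (n : ℕ) (hn : 1 ≤ n) (a ε : ℝ) (ha : 0 < a) (hε : 0 ≤ ε)
    (e : ℝ → ℝ) (he : ContDiff ℝ (⊤ : ℕ∞) e)
    (σ : ℝ → ℝ)
    (hσ : σ = (fun f : ℝ → ℝ => fun t => deriv f t + a * f t)^[n - 1] e)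
    (hσbnd : ∀ t ≥ (0 : ℝ), |σ t| ≤ ε) :
    ∀ i ≤ n - 1, ∀ δ > (0 : ℝ), ∃ T ≥ (0 : ℝ), ∀ t ≥ T,
      |iteratedDeriv i e t| ≤ (2 * a) ^ i * ε / a ^ (n - 1) + δ := by
  have hasymp : AsympNormLE ((slidingOp a)^[n - 1] e) ε :=
    .of_eventually_le (eventually_atTop.2 ⟨0, hσ ▸ hσbnd⟩)
  exact fun i hi δ hδ => (atTop_basis' 0).eventually_iff.1 <|
    sliding_tracking_bound_asymptotic_general ha (contDiff_infty.1 he _) hasymp hi _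
      (lt_add_of_pos_right _ hδ)
end
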